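/- arXiv:2411.19622 — 2 statements merged into one kernel-verified Lean document; each statement's English description precedes it below -/
import Mathlib

section
/- For all complex numbers α and β, the squared overlap of the coherent states c(α) and c(β) satisfies |⟨c(α), c(β)⟩|² = exp(−|α − β|²). -/
/-- The coherent state amplitude: `n`-th entry of the coherent state `c(α)`,
namely `e^{-|α|²/2} αⁿ / √(n!)`. -/
noncomputable def coherentAmp (α : ℂ) (n : ℕ) : ℂ :=
  Complex.exp (-((‖α‖ : ℂ) ^ 2 / 2)) * α ^ n / (Real.sqrt (Nat.factorial n) : ℂ)

/-- the squared overlap of the coherent states `c(α)` and `c(β)` is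
`|⟨c(α), c(β)⟩|² = exp(−|α − β|²)`. -/
theorem coherent_state_overlap (α β : ℂ) :
    ‖∑' n : ℕ, (starRingEnd ℂ) (coherentAmp α n) * coherentAmp β n‖ ^ 2
      = Real.exp (-‖α - β‖ ^ 2) := by
  have hterm : ∀ n : ℕ, (starRingEnd ℂ) (coherentAmp α n) * coherentAmp β n
      = Complex.exp (-((‖α‖ : ℂ) ^ 2 / 2)) * Complex.exp (-((‖β‖ : ℂ) ^ 2 / 2)) *
        (((starRingEnd ℂ) α * β) ^ n / (Nat.factorial n : ℂ)) := by
    intro n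
    have hs : ((Real.sqrt (Nat.factorial n) : ℝ) : ℂ) * ((Real.sqrt (Nat.factorial n) : ℝ) : ℂ)
        = (Nat.factorial n : ℂ) := by
      rw [← Complex.ofReal_mul, Real.mul_self_sqrt (Nat.cast_nonneg _), Complex.ofReal_natCast]
    have he : (starRingEnd ℂ) (Complex.exp (-((‖α‖ : ℂ) ^ 2 / 2)))
        = Complex.exp (-((‖α‖ : ℂ) ^ 2 / 2)) := by
      have h2 : (starRingEnd ℂ) (2 : ℂ) = 2 := Complex.conj_ofNat 2
      rw [← Complex.exp_conj]
      simp [h2]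
    unfold coherentAmp
    rw [map_div₀, map_mul, he, map_pow, Complex.conj_ofReal, div_mul_div_comm, hs, mul_pow]
    ring
  have hsum := NormedSpace.expSeries_div_hasSum_exp ((starRingEnd ℂ) α * β)
  rw [← Complex.exp_eq_exp_ℂ] at hsum
  rw [tsum_congr hterm, (hsum.mul_left _).tsum_eq, ← Complex.exp_add, ← Complex.exp_add,
    Complex.norm_exp, ← Real.exp_nat_mul]
  congr 1
  have h1 : (-((‖α‖ : ℂ) ^ 2 / 2)).re = -(‖α‖ ^ 2 / 2) := by
    rw [← Complex.ofReal_re (-(‖α‖ ^ 2 / 2))]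
    push_cast
    rfl
  have h2 : (-((‖β‖ : ℂ) ^ 2 / 2)).re = -(‖β‖ ^ 2 / 2) := by
    rw [← Complex.ofReal_re (-(‖β‖ ^ 2 / 2))]
    push_cast
    rfl
  rw [Complex.add_re, Complex.add_re, h1, h2]
  simp only [Complex.sq_norm, Complex.normSq_apply, Complex.mul_re, Complex.conj_re,
    Complex.conj_im, Complex.sub_re, Complex.sub_im]
  push_cast
  ring
end

section
/- Let μ > 0 and σ > 0 be reals. For each n ∈ ℕ, consider n i.i.d. real observations, distributed either all according to N(0, σ²) (hypothesis 0) or all according to N(μ, σ²) (hypothesis 1), and the threshold test that declares hypothesis 1 if and only if Σ_{i=1}^n X_i > nμ/2. Let a_n := ℙ_{N(0,σ²)^{⊗n}}(Σ_i X_i > nμ/2) and b_n := ℙ_{N(μ,σ²)^{⊗n}}(Σ_i X_i ≤ nμ/2) be its two error probabilities. Then lim_{n→∞} −(1/n) ln( ½(a_n + b_n) ) = μ²/(8σ²). -/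
open MeasureTheory ProbabilityTheory Filter in
theorem aux_law (n : ℕ) (m : ℝ) (v : NNReal) :
    (Measure.pi fun _ : Fin n => gaussianReal m v).map (fun x => ∑ i, x i)
      = gaussianReal (n * m) (n * v) := by
  have : IsProbabilityMeasure ((Measure.pi fun _ : Fin n => gaussianReal m v).map
      (fun x => ∑ i, x i)) :=
    Measure.isProbabilityMeasure_map (by fun_prop)
  apply Measure.ext_of_charFun
  rw [charFun_map_sum_pi_eq_prod]
  ext t
  simp only [Finset.prod_const, Finset.card_univ, Fintype.card_fin, Pi.pow_apply,
    charFun_gaussianReal]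
  rw [← Complex.exp_nat_mul]
  congr 1
  push_cast
  ring

open MeasureTheory ProbabilityTheory Filter in
theorem aux_upper (w : NNReal) (hw : w ≠ 0) (c : ℝ) (hc : 0 ≤ c) :
    (gaussianReal 0 w).real {x | c < x} ≤ Real.exp (-c ^ 2 / (2 * w)) := by
  have hw' : (0 : ℝ) < w := by positivity
  have h := measure_ge_le_exp_mul_mgf (μ := gaussianReal 0 w) (X := id) (t := c / w) c
    (by positivity) (integrable_exp_mul_gaussianReal _)
  rw [mgf_id_gaussianReal] at h
  refine (measureReal_mono (fun x hx => ?_)).trans (h.trans (le_of_eq ?_))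
  · simp only [Set.mem_setOf_eq, id] at hx ⊢
    exact hx.le
  · rw [← Real.exp_add]
    congr 1
    field_simp
    ring

open MeasureTheory ProbabilityTheory Filter in
theorem aux_upper_left (m : ℝ) (w : NNReal) (hw : w ≠ 0) (c : ℝ) (hc : c ≤ m) :
    (gaussianReal m w).real {x | x ≤ c} ≤ Real.exp (-(m - c) ^ 2 / (2 * w)) := by
  have hw' : (0 : ℝ) < w := by positivity
  have h := measure_le_le_exp_mul_mgf (μ := gaussianReal m w) (X := id) (t := (c - m) / w) c
    (div_nonpos_of_nonpos_of_nonneg (by linarith) hw'.le) (integrable_exp_mul_gaussianReal _)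
  rw [mgf_id_gaussianReal] at h
  refine h.trans (le_of_eq ?_)
  rw [← Real.exp_add]
  congr 1
  field_simp
  ring

open MeasureTheory ProbabilityTheory Filter in
theorem aux_lower (w : NNReal) (hw : w ≠ 0) (c : ℝ) (hc : 0 ≤ c) :
    (√(2 * Real.pi * w))⁻¹ * Real.exp (-(c + 1) ^ 2 / (2 * w))
      ≤ (gaussianReal 0 w).real {x | c < x} := by
  have hw' : (0 : ℝ) < w := by positivity
  have h1 : (gaussianReal 0 w).real (Set.Ioc c (c + 1)) ≤ (gaussianReal 0 w).real {x | c < x} :=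
    measureReal_mono (fun x hx => hx.1)
  refine le_trans ?_ h1
  rw [measureReal_def, gaussianReal_apply_eq_integral _ hw,
    ENNReal.toReal_ofReal (integral_nonneg (fun x => gaussianPDFReal_nonneg _ _ _))]
  have h2 := setIntegral_mono_on (μ := volume) (s := Set.Ioc c (c + 1))
    (f := fun _ => (√(2 * Real.pi * w))⁻¹ * Real.exp (-(c + 1) ^ 2 / (2 * w)))
    (g := gaussianPDFReal 0 w) (integrableOn_const (by simp))
    (integrable_gaussianPDFReal _ _).integrableOn measurableSet_Ioc (by
      intro x hx
      rw [gaussianPDFReal_def]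
      simp only [sub_zero]
      have := hx.1
      have := hx.2
      gcongr
      linarith)
  simpa using h2

open MeasureTheory ProbabilityTheory Filter in
theorem aux_lim (μ σ : ℝ) (hσ : 0 < σ) :
    Tendsto (fun n : ℕ => (Real.log 2 + Real.log (2 * Real.pi * σ ^ 2) / 2) / (n : ℝ)
      + (Real.log n / n) / 2 + (μ / 2 + 1 / (n : ℝ)) ^ 2 / (2 * σ ^ 2)) atTop
      (nhds (μ ^ 2 / (8 * σ ^ 2))) := by
  have h1 := tendsto_const_div_atTop_nhds_zero_nat
    (Real.log 2 + Real.log (2 * Real.pi * σ ^ 2) / 2)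
  have h2 : Tendsto (fun n : ℕ => Real.log n / n) atTop (nhds 0) := by
    have := (Real.tendsto_pow_log_div_mul_add_atTop 1 0 1 one_ne_zero).comp
      (tendsto_natCast_atTop_atTop (R := ℝ))
    simpa [Function.comp_def] using this
  have h3 := tendsto_const_div_atTop_nhds_zero_nat (1 : ℝ)
  have h := (h1.add (h2.div_const 2)).add (((h3.const_add (μ / 2)).pow 2).div_const (2 * σ ^ 2))
  convert h using 2
  field_simp
  ring


open MeasureTheory ProbabilityTheory Filter in
/-- for `μ, σ > 0`, the threshold test on `n` i.i.d. Gaussian observations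
(`N(0,σ²)` under hypothesis 0, `N(μ,σ²)` under hypothesis 1) that declares hypothesis 1
iff `Σᵢ Xᵢ > nμ/2` has error probabilities `a_n, b_n` whose equal-prior average satisfies
`lim_{n→∞} −(1/n) ln(½(a_n + b_n)) = μ²/(8σ²)`. -/
theorem threshold_test_chernoff_exponent (μ σ : ℝ) (hμ : 0 < μ) (hσ : 0 < σ) :
    Tendsto (fun n : ℕ =>
        -(1 / (n : ℝ)) * Real.log ((1 / 2) *
          (((Measure.pi fun _ : Fin n => gaussianReal 0 ⟨σ ^ 2, sq_nonneg σ⟩)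
              {x | (n : ℝ) * μ / 2 < ∑ i, x i}).toReal
            + ((Measure.pi fun _ : Fin n => gaussianReal μ ⟨σ ^ 2, sq_nonneg σ⟩)
              {x | ∑ i, x i ≤ (n : ℝ) * μ / 2}).toReal)))
      atTop (nhds (μ ^ 2 / (8 * σ ^ 2))) := by
  have hσ2 : (0 : ℝ) < σ ^ 2 := by positivity
  have key : ∀ n : ℕ, 1 ≤ n →
      μ ^ 2 / (8 * σ ^ 2) ≤ -(1 / (n : ℝ)) * Real.log ((1 / 2) *
          (((Measure.pi fun _ : Fin n => gaussianReal 0 ⟨σ ^ 2, sq_nonneg σ⟩)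
              {x | (n : ℝ) * μ / 2 < ∑ i, x i}).toReal
            + ((Measure.pi fun _ : Fin n => gaussianReal μ ⟨σ ^ 2, sq_nonneg σ⟩)
              {x | ∑ i, x i ≤ (n : ℝ) * μ / 2}).toReal)) ∧
      -(1 / (n : ℝ)) * Real.log ((1 / 2) *
          (((Measure.pi fun _ : Fin n => gaussianReal 0 ⟨σ ^ 2, sq_nonneg σ⟩)
              {x | (n : ℝ) * μ / 2 < ∑ i, x i}).toReal
            + ((Measure.pi fun _ : Fin n => gaussianReal μ ⟨σ ^ 2, sq_nonneg σ⟩)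
              {x | ∑ i, x i ≤ (n : ℝ) * μ / 2}).toReal)) ≤
      (Real.log 2 + Real.log (2 * Real.pi * σ ^ 2) / 2) / (n : ℝ)
      + (Real.log n / n) / 2 + (μ / 2 + 1 / (n : ℝ)) ^ 2 / (2 * σ ^ 2) := by
    intro n hn
    have hn' : (0 : ℝ) < n := by exact_mod_cast hn
    set v : NNReal := ⟨σ ^ 2, sq_nonneg σ⟩ with hv
    have hvr : (v : ℝ) = σ ^ 2 := rfl
    have hw : (n : NNReal) * v ≠ 0 := by
      rw [← NNReal.coe_ne_zero]
      push_cast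
      rw [hvr]
      positivity
    have ha : ((Measure.pi fun _ : Fin n => gaussianReal 0 v)
              {x | (n : ℝ) * μ / 2 < ∑ i, x i}).toReal
        = (gaussianReal 0 (n * v)).real {x | (n : ℝ) * μ / 2 < x} := by
      have := aux_law n 0 v
      rw [mul_zero] at this
      rw [← this, measureReal_def,
        Measure.map_apply (by fun_prop) (show MeasurableSet {x : ℝ | (n : ℝ) * μ / 2 < x} from measurableSet_Ioi)]
      rfl
    have hb : ((Measure.pi fun _ : Fin n => gaussianReal μ v)
              {x | ∑ i, x i ≤ (n : ℝ) * μ / 2}).toReal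
        = (gaussianReal (n * μ) (n * v)).real {x | x ≤ (n : ℝ) * μ / 2} := by
      rw [← aux_law n μ v, measureReal_def,
        Measure.map_apply (by fun_prop) (show MeasurableSet {x : ℝ | x ≤ (n : ℝ) * μ / 2} from measurableSet_Iic)]
      rfl
    rw [ha, hb]
    have hnm : 0 < (n : ℝ) * μ := by positivity
    have u1 := aux_upper (n * v) hw (n * μ / 2) (by positivity)
    have u2 := aux_upper_left (n * μ) (n * v) hw (n * μ / 2) (by linarith)
    have l1 := aux_lower (n * v) hw (n * μ / 2) (by positivity)
    have l2 : 0 ≤ (gaussianReal (n * μ) (n * v)).real {x | x ≤ (n : ℝ) * μ / 2} :=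
      measureReal_nonneg
    set A := (gaussianReal 0 (n * v)).real {x | (n : ℝ) * μ / 2 < x}
    set B := (gaussianReal (n * μ) (n * v)).real {x | x ≤ (n : ℝ) * μ / 2}
    push_cast [hvr] at u1 u2 l1
    have e1 : -((n : ℝ) * μ / 2) ^ 2 / (2 * (n * σ ^ 2)) = -(n * (μ ^ 2 / (8 * σ ^ 2))) := by
      field_simp
      ring
    have e2 : -((n : ℝ) * μ - n * μ / 2) ^ 2 / (2 * (n * σ ^ 2))
        = -(n * (μ ^ 2 / (8 * σ ^ 2))) := by
      field_simp
      ring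
    rw [e1] at u1
    rw [e2] at u2
    have hL : 0 < (√(2 * Real.pi * (n * σ ^ 2)))⁻¹ *
        Real.exp (-(n * μ / 2 + 1) ^ 2 / (2 * (n * σ ^ 2))) := by positivity
    have hpos : 0 < 1 / 2 * (A + B) := by linarith
    constructor
    · have := Real.log_le_log hpos (y := Real.exp (-(n * (μ ^ 2 / (8 * σ ^ 2))))) (by linarith)
      rw [Real.log_exp] at this
      have h3 := mul_le_mul_of_nonneg_left this (by positivity : 0 ≤ 1 / (n : ℝ))
      have h4 : 1 / (n : ℝ) * -(n * (μ ^ 2 / (8 * σ ^ 2))) = -(μ ^ 2 / (8 * σ ^ 2)) := by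
        field_simp
      linarith
    · have := Real.log_le_log (by positivity) (show (1 / 2) * ((√(2 * Real.pi * (n * σ ^ 2)))⁻¹ *
        Real.exp (-(n * μ / 2 + 1) ^ 2 / (2 * (n * σ ^ 2)))) ≤ 1 / 2 * (A + B) by linarith)
      rw [Real.log_mul (by norm_num) hL.ne', Real.log_mul (by positivity) (by positivity),
        Real.log_exp, Real.log_inv, Real.log_sqrt (by positivity),
        show 2 * Real.pi * ((n : ℝ) * σ ^ 2) = (2 * Real.pi * σ ^ 2) * n by ring,
        Real.log_mul (by positivity) (by positivity), one_div, Real.log_inv] at this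
      have h3 := mul_le_mul_of_nonneg_left this (by positivity : 0 ≤ 1 / (n : ℝ))
      rw [neg_mul, neg_le, ← one_div 2] at *
      refine le_trans (le_of_eq ?_) h3
      field_simp
      ring
  refine tendsto_of_tendsto_of_tendsto_of_le_of_le' tendsto_const_nhds (aux_lim μ σ hσ) ?_ ?_
  · filter_upwards [eventually_ge_atTop 1] with n hn using (key n hn).1
  · filter_upwards [eventually_ge_atTop 1] with n hn using (key n hn).2
end
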